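/- Let w ≥ 0 and suppose Assumption 2.a holds. Then every Stackelberg equilibrium of the cooperative game is a pure-strategy Nash equilibrium of the blocking game. -/

import Mathlib

open scoped Classical

noncomputable section

/-- Sequential game payoff of the leader (depends only on his own trajectory). -/
def aSeq {Γ1 : Type*} (κ : ℝ) (T1 : Γ1 → Prop) (p1 : Γ1 → ℝ) (i : Γ1) : ℝ :=
  if T1 i then κ else p1 i

/-- Follower payoff (same in the sequential and the cooperative game). -/
def bPay {Γ1 Γ2 : Type*} (κ lam : ℝ) (T2 : Γ2 → Prop) (C : Γ1 → Γ2 → Prop)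
    (p2 : Γ2 → ℝ) (i : Γ1) (j : Γ2) : ℝ :=
  if T2 j then κ else if C i j then lam else p2 j

/-- Cooperative game payoff of the leader. -/
def aPay {Γ1 Γ2 : Type*} (κ lam : ℝ) (T1 : Γ1 → Prop) (C : Γ1 → Γ2 → Prop)
    (p1 : Γ1 → ℝ) (i : Γ1) (j : Γ2) : ℝ :=
  if T1 i then κ else if C i j then lam else p1 i

/-- Blocking game payoff of the leader. -/
def aBl {Γ1 Γ2 : Type*} (κ lam w : ℝ) (T1 : Γ1 → Prop) (C : Γ1 → Γ2 → Prop)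
    (p1 : Γ1 → ℝ) (p2 : Γ2 → ℝ) (i : Γ1) (j : Γ2) : ℝ :=
  if T1 i then κ else if C i j then lam else if p1 i < p2 j then p1 i else p1 i + w

/-- Blocking game payoff of the follower. -/
def bBl {Γ1 Γ2 : Type*} (κ lam w : ℝ) (T2 : Γ2 → Prop) (C : Γ1 → Γ2 → Prop)
    (p1 : Γ1 → ℝ) (p2 : Γ2 → ℝ) (i : Γ1) (j : Γ2) : ℝ :=
  if T2 j then κ else if C i j then lam else if p1 i ≥ p2 j then p2 j else p2 j + w

/-- A trajectory pair is feasible: stays on track and does not collide. -/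
def Feasible {Γ1 Γ2 : Type*} (T1 : Γ1 → Prop) (T2 : Γ2 → Prop) (C : Γ1 → Γ2 → Prop)
    (i : Γ1) (j : Γ2) : Prop :=
  ¬ T1 i ∧ ¬ T2 j ∧ ¬ C i j

/-- Best-response set of player 2 to strategy `i` of player 1. -/
def BestResponse {Γ1 Γ2 : Type*} (B : Γ1 → Γ2 → ℝ) (i : Γ1) : Set Γ2 :=
  {j | ∀ j', B i j' ≤ B i j}

/-- Stackelberg equilibrium with player 1 as leader. -/
def StackelbergEq {Γ1 Γ2 : Type*} (A B : Γ1 → Γ2 → ℝ) (iStar : Γ1) (jStar : Γ2) : Prop :=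
  (∀ i, sInf (A i '' BestResponse B i) ≤ sInf (A iStar '' BestResponse B iStar)) ∧
  jStar ∈ BestResponse B iStar

/-- Pure-strategy Nash equilibrium. -/
def NashEq {Γ1 Γ2 : Type*} (A B : Γ1 → Γ2 → ℝ) (iStar : Γ1) (jStar : Γ2) : Prop :=
  (∀ i, A i jStar ≤ A iStar jStar) ∧ (∀ j, B iStar j ≤ B iStar jStar)

/-- Sequential maximization pair: the leader maximizes `aSeq`, the follower best responds. -/
def SeqMaxPair {Γ1 Γ2 : Type*} (κ lam : ℝ) (T1 : Γ1 → Prop) (T2 : Γ2 → Prop)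
    (C : Γ1 → Γ2 → Prop) (p1 : Γ1 → ℝ) (p2 : Γ2 → ℝ) (iS : Γ1) (jS : Γ2) : Prop :=
  (∀ i, aSeq κ T1 p1 i ≤ aSeq κ T1 p1 iS) ∧
  (∀ j, bPay κ lam T2 C p2 iS j ≤ bPay κ lam T2 C p2 iS jS)

/-- Assumption 2.a: a feasible trajectory pair exists. -/
def AssumptionA {Γ1 Γ2 : Type*} (T1 : Γ1 → Prop) (T2 : Γ2 → Prop)
    (C : Γ1 → Γ2 → Prop) : Prop :=
  ∃ i j, Feasible T1 T2 C i j

/-- Assumption 2.b. -/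
def AssumptionB {Γ1 Γ2 : Type*} (κ lam : ℝ) (T1 : Γ1 → Prop) (T2 : Γ2 → Prop)
    (C : Γ1 → Γ2 → Prop) (p1 : Γ1 → ℝ) (p2 : Γ2 → ℝ) : Prop :=
  (∃ i, ¬ T1 i) ∧
  ∃ jbar : Γ2, ∀ i' : Γ1, (∀ i, aSeq κ T1 p1 i ≤ aSeq κ T1 p1 i') →
    lam < bPay κ lam T2 C p2 i' jbar

/-- Blocking trajectory pair. -/
def BlockingPair {Γ1 Γ2 : Type*} (T1 : Γ1 → Prop) (T2 : Γ2 → Prop)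
    (C : Γ1 → Γ2 → Prop) (p1 : Γ1 → ℝ) (p2 : Γ2 → ℝ) (i : Γ1) (j : Γ2) : Prop :=
  Feasible T1 T2 C i j ∧ p2 j < p1 i ∧ ∀ jc, p2 j < p2 jc → (T2 jc ∨ C i jc)

/-!
Losing the track or colliding yields a nonpositive payoff, so at a feasible leader trajectory every
best response of the follower is feasible and the leader's guaranteed payoff is exactly his
progress. A Stackelberg equilibrium of the cooperative game is therefore feasible, and its leader
payoff dominates the progress of every leader trajectory that occurs in a feasible pair; hence it
is a Nash equilibrium of the cooperative game. The blocking bonus `w` goes to whoever is ahead, so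
against a fixed opponent it is monotone in one's own progress and creates no profitable deviation.
-/

section

variable {Γ1 Γ2 : Type*}

namespace StackelbergEq

lemma le_leader_payoff {A B : Γ1 → Γ2 → ℝ} {iStar : Γ1} {jStar : Γ2}
    (h : StackelbergEq A B iStar jStar) (hbdd : BddBelow (A iStar '' BestResponse B iStar))
    {i : Γ1} (hne : (BestResponse B i).Nonempty) {c : ℝ} (hc : ∀ j ∈ BestResponse B i, c ≤ A i j) :
    c ≤ A iStar jStar :=
  calc
    c ≤ sInf (A i '' BestResponse B i) := le_csInf (hne.image _) (Set.forall_mem_image.2 hc)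
    _ ≤ sInf (A iStar '' BestResponse B iStar) := h.1 i
    _ ≤ A iStar jStar := csInf_le hbdd (Set.mem_image_of_mem _ h.2)

end StackelbergEq

lemma bestResponse_nonempty [Finite Γ2] [Nonempty Γ2] (B : Γ1 → Γ2 → ℝ) (i : Γ1) :
    (BestResponse B i).Nonempty :=
  Finite.exists_max (B i)

variable {κ lam w : ℝ} {T1 : Γ1 → Prop} {T2 : Γ2 → Prop} {C : Γ1 → Γ2 → Prop}
  {p1 : Γ1 → ℝ} {p2 : Γ2 → ℝ} {i i' iStar : Γ1} {j j' jStar : Γ2}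

lemma Feasible.aPay_eq (h : Feasible T1 T2 C i j) : aPay κ lam T1 C p1 i j = p1 i := by
  rw [aPay, if_neg h.1, if_neg h.2.2]

lemma Feasible.bPay_eq (h : Feasible T1 T2 C i j) : bPay κ lam T2 C p2 i j = p2 j := by
  rw [bPay, if_neg h.2.1, if_neg h.2.2]

lemma not_offTrack_and_not_collide_of_aPay_pos (hκ : κ ≤ 0) (hlam : lam ≤ 0)
    (h : 0 < aPay κ lam T1 C p1 i j) : ¬ T1 i ∧ ¬ C i j := by
  unfold aPay at h
  split_ifs at h with hT hC
  · exact absurd h hκ.not_gt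
  · exact absurd h hlam.not_gt
  · exact ⟨hT, hC⟩

lemma not_offTrack_and_not_collide_of_bPay_pos (hκ : κ ≤ 0) (hlam : lam ≤ 0)
    (h : 0 < bPay κ lam T2 C p2 i j) : ¬ T2 j ∧ ¬ C i j :=
  -- The two cooperative payoffs agree up to exchanging the players.
  not_offTrack_and_not_collide_of_aPay_pos (C := fun j i => C i j) hκ hlam h

lemma bddBelow_image_aPay (s : Set Γ2) : BddBelow (aPay κ lam T1 C p1 i '' s) := by
  refine (Set.toFinite {κ, lam, p1 i}).bddBelow.mono (Set.image_subset_iff.2 fun j _ => ?_)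
  simp only [Set.mem_preimage, aPay]
  split_ifs <;> simp

lemma Feasible.of_mem_bestResponse (hκ : κ ≤ 0) (hlam : lam ≤ 0) (hp2 : 0 < p2 j)
    (h : Feasible T1 T2 C i j) (hj' : j' ∈ BestResponse (bPay κ lam T2 C p2) i) :
    Feasible T1 T2 C i j' := by
  have hpos : 0 < bPay κ lam T2 C p2 i j' :=
    calc
      0 < p2 j := hp2
      _ = bPay κ lam T2 C p2 i j := h.bPay_eq.symm
      _ ≤ bPay κ lam T2 C p2 i j' := hj' j
  exact ⟨h.1, not_offTrack_and_not_collide_of_bPay_pos hκ hlam hpos⟩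

lemma not_offTrack_of_mem_bestResponse (hκlam : κ < lam) (hp2 : κ < p2 j) (hT2 : ¬ T2 j)
    (hj' : j' ∈ BestResponse (bPay κ lam T2 C p2) i) : ¬ T2 j' := by
  intro hT2'
  have hκ_lt : κ < bPay κ lam T2 C p2 i j := by
    rw [bPay, if_neg hT2]
    split_ifs <;> assumption
  have hle : bPay κ lam T2 C p2 i j ≤ κ := (hj' j).trans_eq (if_pos hT2')
  exact hκ_lt.not_ge hle

namespace StackelbergEq

lemma le_aPay_of_feasible (hκ : κ ≤ 0) (hlam : lam ≤ 0) (hp2 : 0 < p2 j)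
    (h : StackelbergEq (aPay κ lam T1 C p1) (bPay κ lam T2 C p2) iStar jStar)
    (hBR : (BestResponse (bPay κ lam T2 C p2) i).Nonempty) (hij : Feasible T1 T2 C i j) :
    p1 i ≤ aPay κ lam T1 C p1 iStar jStar :=
  h.le_leader_payoff (bddBelow_image_aPay _) hBR fun _ hk =>
    (hij.of_mem_bestResponse hκ hlam hp2 hk).aPay_eq.ge

lemma feasible (hκlam : κ < lam) (hlam : lam ≤ 0) (hp1 : 0 < p1 i) (hp2 : 0 < p2 j)
    (h : StackelbergEq (aPay κ lam T1 C p1) (bPay κ lam T2 C p2) iStar jStar)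
    (hBR : (BestResponse (bPay κ lam T2 C p2) i).Nonempty) (hij : Feasible T1 T2 C i j) :
    Feasible T1 T2 C iStar jStar := by
  have hκ : κ < 0 := hκlam.trans_le hlam
  have hpos : 0 < aPay κ lam T1 C p1 iStar jStar :=
    hp1.trans_le (h.le_aPay_of_feasible hκ.le hlam hp2 hBR hij)
  obtain ⟨hT1, hC⟩ := not_offTrack_and_not_collide_of_aPay_pos hκ.le hlam hpos
  have hT2 : ¬ T2 jStar :=
    not_offTrack_of_mem_bestResponse hκlam (hκ.trans hp2) hij.2.1 h.2
  exact ⟨hT1, hT2, hC⟩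

lemma nashEq_of_feasible (hκ : κ ≤ 0) (hlam : lam ≤ 0) (hp1 : 0 ≤ p1 iStar) (hp2 : 0 < p2 jStar)
    (hBR : ∀ i, (BestResponse (bPay κ lam T2 C p2) i).Nonempty)
    (h : StackelbergEq (aPay κ lam T1 C p1) (bPay κ lam T2 C p2) iStar jStar)
    (hfeas : Feasible T1 T2 C iStar jStar) :
    NashEq (aPay κ lam T1 C p1) (bPay κ lam T2 C p2) iStar jStar := by
  refine ⟨fun i => ?_, h.2⟩
  rcases le_or_gt (aPay κ lam T1 C p1 i jStar) 0 with hnonpos | hpos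
  · exact hnonpos.trans (hp1.trans_eq hfeas.aPay_eq.symm)
  · obtain ⟨hT1, hC⟩ := not_offTrack_and_not_collide_of_aPay_pos hκ hlam hpos
    have hi : Feasible T1 T2 C i jStar := ⟨hT1, hfeas.2.1, hC⟩
    exact hi.aPay_eq.trans_le (h.le_aPay_of_feasible hκ hlam hp2 (hBR i) hi)

end StackelbergEq

lemma aPay_le_aBl (hw : 0 ≤ w) : aPay κ lam T1 C p1 i j ≤ aBl κ lam w T1 C p1 p2 i j := by
  unfold aPay aBl
  split_ifs <;> linarith

lemma bPay_le_bBl (hw : 0 ≤ w) : bPay κ lam T2 C p2 i j ≤ bBl κ lam w T2 C p1 p2 i j := by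
  unfold bPay bBl
  split_ifs <;> linarith

lemma Feasible.aBl_eq_add_of_le (h : Feasible T1 T2 C i j) (hle : p2 j ≤ p1 i) :
    aBl κ lam w T1 C p1 p2 i j = p1 i + w := by
  rw [aBl, if_neg h.1, if_neg h.2.2, if_neg hle.not_gt]

lemma Feasible.bBl_eq_add_of_lt (h : Feasible T1 T2 C i j) (hlt : p1 i < p2 j) :
    bBl κ lam w T2 C p1 p2 i j = p2 j + w := by
  rw [bBl, if_neg h.2.1, if_neg h.2.2, if_neg hlt.not_ge]

lemma aBl_eq_aPay (h : ¬ T1 i → ¬ C i j → p1 i < p2 j) :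
    aBl κ lam w T1 C p1 p2 i j = aPay κ lam T1 C p1 i j := by
  unfold aBl aPay
  split_ifs <;> tauto

lemma bBl_eq_bPay (h : ¬ T2 j → ¬ C i j → p2 j ≤ p1 i) :
    bBl κ lam w T2 C p1 p2 i j = bPay κ lam T2 C p2 i j := by
  unfold bBl bPay
  split_ifs <;> tauto

lemma Feasible.aBl_le_aBl (hw : 0 ≤ w) (h : Feasible T1 T2 C i' j)
    (hle : aPay κ lam T1 C p1 i j ≤ aPay κ lam T1 C p1 i' j) :
    aBl κ lam w T1 C p1 p2 i j ≤ aBl κ lam w T1 C p1 p2 i' j := by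
  by_cases hno_bonus : ¬ T1 i → ¬ C i j → p1 i < p2 j
  · exact (aBl_eq_aPay hno_bonus).trans_le (hle.trans (aPay_le_aBl hw))
  · push Not at hno_bonus
    obtain ⟨hT1, hC, hahead⟩ := hno_bonus
    have hi : Feasible T1 T2 C i j := ⟨hT1, h.2.1, hC⟩
    rw [hi.aPay_eq, h.aPay_eq] at hle
    rw [hi.aBl_eq_add_of_le hahead, h.aBl_eq_add_of_le (hahead.trans hle)]
    gcongr

lemma Feasible.bBl_le_bBl (hw : 0 ≤ w) (h : Feasible T1 T2 C i j')
    (hle : bPay κ lam T2 C p2 i j ≤ bPay κ lam T2 C p2 i j') :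
    bBl κ lam w T2 C p1 p2 i j ≤ bBl κ lam w T2 C p1 p2 i j' := by
  by_cases hno_bonus : ¬ T2 j → ¬ C i j → p2 j ≤ p1 i
  · exact (bBl_eq_bPay hno_bonus).trans_le (hle.trans (bPay_le_bBl hw))
  · push Not at hno_bonus
    obtain ⟨hT2, hC, hahead⟩ := hno_bonus
    have hj : Feasible T1 T2 C i j := ⟨h.1, hT2, hC⟩
    rw [hj.bPay_eq, h.bPay_eq] at hle
    rw [hj.bBl_eq_add_of_lt hahead, h.bBl_eq_add_of_lt (hahead.trans_le hle)]
    gcongr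

lemma NashEq.blocking_of_cooperative (hw : 0 ≤ w)
    (h : NashEq (aPay κ lam T1 C p1) (bPay κ lam T2 C p2) iStar jStar)
    (hfeas : Feasible T1 T2 C iStar jStar) :
    NashEq (aBl κ lam w T1 C p1 p2) (bBl κ lam w T2 C p1 p2) iStar jStar :=
  ⟨fun i => hfeas.aBl_le_aBl hw (h.1 i), fun j => hfeas.bBl_le_bBl hw (h.2 j)⟩

end

theorem stmt14_general {Γ1 Γ2 : Type*} {κ lam : ℝ} (hκlam : κ < lam) (hlam : lam ≤ 0)
    {T1 : Γ1 → Prop} {T2 : Γ2 → Prop} {C : Γ1 → Γ2 → Prop} {p1 : Γ1 → ℝ} {p2 : Γ2 → ℝ}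
    (hp1 : ∀ i, 0 < p1 i) (hp2 : ∀ j, 0 < p2 j) {w : ℝ} (hw : 0 ≤ w)
    (hBR : ∀ i, (BestResponse (bPay κ lam T2 C p2) i).Nonempty)
    (hA : AssumptionA T1 T2 C) {iStar : Γ1} {jStar : Γ2}
    (h : StackelbergEq (aPay κ lam T1 C p1) (bPay κ lam T2 C p2) iStar jStar) :
    NashEq (aBl κ lam w T1 C p1 p2) (bBl κ lam w T2 C p1 p2) iStar jStar := by
  obtain ⟨i, j, hij⟩ := hA
  have hfeas : Feasible T1 T2 C iStar jStar :=
    h.feasible hκlam hlam (hp1 i) (hp2 j) (hBR i) hij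
  have hcoop : NashEq (aPay κ lam T1 C p1) (bPay κ lam T2 C p2) iStar jStar :=
    h.nashEq_of_feasible (hκlam.le.trans hlam) hlam (hp1 iStar).le (hp2 jStar) hBR hfeas
  exact hcoop.blocking_of_cooperative hw hfeas

theorem stmt14 {Γ1 Γ2 : Type*} [Fintype Γ1] [Fintype Γ2] [Nonempty Γ1] [Nonempty Γ2]
    (κ lam : ℝ) (hκlam : κ < lam) (hlam0 : lam < 0)
    (T1 : Γ1 → Prop) (T2 : Γ2 → Prop) (C : Γ1 → Γ2 → Prop)
    (p1 : Γ1 → ℝ) (p2 : Γ2 → ℝ)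
    (hp1 : ∀ i, 0 < p1 i) (hp2 : ∀ j, 0 < p2 j)
    (w : ℝ) (hw : 0 ≤ w)
    (hA : AssumptionA T1 T2 C)
    (icg : Γ1) (jcg : Γ2)
    (hst : StackelbergEq (aPay κ lam T1 C p1) (bPay κ lam T2 C p2) icg jcg) :
    NashEq (aBl κ lam w T1 C p1 p2) (bBl κ lam w T2 C p1 p2) icg jcg := by
  exact stmt14_general hκlam hlam0.le hp1 hp2 hw (bestResponse_nonempty _) hA hst

end
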